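/- Let P and Q be two probability measures on the same measurable space and let A be any event. Then P(A) + Q(Aᶜ) ≥ (1/2)·exp(−D(P ‖ Q)), where D(P‖Q) is the Kullback–Leibler divergence. -/

import Mathlib

/-!
The Bhattacharyya coefficient `∫ √(dP dQ)`, written as `∫ √(dQ/dP) ∂P`, is bounded on both sides.
Jensen's inequality for `exp` gives `exp (-D(P‖Q) / 2) ≤ ∫ √(dQ/dP) ∂P`. Splitting the integral
along `A` and using the Cauchy–Schwarz inequality on each piece gives
`∫ √(dQ/dP) ∂P ≤ √(P A) √(Q A) + √(P Aᶜ) √(Q Aᶜ)`, and a discrete Cauchy–Schwarz inequality, pairing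
`P A` with `Q Aᶜ`, bounds the square of the right-hand side by
`(P A + Q Aᶜ) (Q A + P Aᶜ) ≤ 2 (P A + Q Aᶜ)`.
-/

open MeasureTheory
open scoped ENNReal Classical

/-- Real-valued Kullback–Leibler divergence (valued in `ℝ≥0∞`, equal to `⊤` when `P` is
not absolutely continuous w.r.t. `Q` or the log-likelihood ratio is not integrable). -/
noncomputable def klDiv {Ω : Type*} [MeasurableSpace Ω] (P Q : Measure Ω) : ℝ≥0∞ :=
  if P ≪ Q ∧ Integrable (fun x => Real.log (P.rnDeriv Q x).toReal) P then
    ENNReal.ofReal (∫ x, Real.log (P.rnDeriv Q x).toReal ∂P)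
  else ⊤

section

variable {Ω : Type*} [MeasurableSpace Ω]

section SqrtIntegral

variable {μ : Measure Ω} {f : Ω → ℝ}

lemma memLp_two_sqrt (hf : Integrable f μ) : MemLp (fun x ↦ √(f x)) 2 μ := by
  rw [memLp_two_iff_integrable_sq (Real.continuous_sqrt.comp_aestronglyMeasurable hf.1)]
  simpa only [Real.sq_sqrt'] using hf.pos_part

lemma integral_sqrt_le_sqrt_mul_sqrt [IsFiniteMeasure μ] (hf : Integrable f μ)
    (hf_nonneg : 0 ≤ᵐ[μ] f) :
    ∫ x, √(f x) ∂μ ≤ √(μ.real Set.univ) * √(∫ x, f x ∂μ) := by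
  have cauchy_schwarz := integral_mul_le_Lp_mul_Lq_of_nonneg (μ := μ) (f := fun _ ↦ 1)
    (g := fun x ↦ √(f x)) .two_two (ae_of_all _ fun _ ↦ zero_le_one)
    (ae_of_all _ fun _ ↦ Real.sqrt_nonneg _) (memLp_const 1) (by simpa using memLp_two_sqrt hf)
  have integral_sq_sqrt : ∫ x, √(f x) ^ 2 ∂μ = ∫ x, f x ∂μ :=
    integral_congr_ae (hf_nonneg.mono fun _ hx ↦ Real.sq_sqrt hx)
  simpa [integral_sq_sqrt, Real.sqrt_eq_rpow (μ.real Set.univ), Real.sqrt_eq_rpow (∫ x, f x ∂μ)]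
    using cauchy_schwarz

end SqrtIntegral

variable {P Q : Measure Ω}

lemma klDiv_ne_top_iff : klDiv P Q ≠ ⊤ ↔ P ≪ Q ∧ Integrable (llr P Q) P := by
  simp [klDiv, llr_def]

/-- Not an equality in general: if `Q` has mass above one, the integral can be negative, and
`ENNReal.ofReal` then truncates it to `0`. -/
lemma integral_llr_le_toReal_klDiv (h : klDiv P Q ≠ ⊤) :
    ∫ x, llr P Q x ∂P ≤ (klDiv P Q).toReal := by
  have klDiv_eq : klDiv P Q = ENNReal.ofReal (∫ x, llr P Q x ∂P) := if_pos (klDiv_ne_top_iff.mp h)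
  rw [klDiv_eq, ENNReal.toReal_ofReal']
  exact le_max_left _ _

/-- The Bhattacharyya coefficient (Hellinger affinity) `∫ √(dP dQ)` of two measures, which measures
their overlap. It is encoded as an integral against `P`: the part of `Q` singular to `P` does not
contribute. -/
noncomputable def bhattacharyyaCoeff (P Q : Measure Ω) : ℝ :=
  ∫ x, √(Q.rnDeriv P x).toReal ∂P

lemma bhattacharyyaCoeff_nonneg : 0 ≤ bhattacharyyaCoeff P Q :=
  integral_nonneg fun _ ↦ Real.sqrt_nonneg _

lemma integrable_sqrt_toReal_rnDeriv [IsFiniteMeasure P] [IsFiniteMeasure Q] :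
    Integrable (fun x ↦ √(Q.rnDeriv P x).toReal) P :=
  (memLp_two_sqrt Measure.integrable_toReal_rnDeriv).integrable one_le_two

lemma exp_neg_half_integral_llr_le_bhattacharyyaCoeff [IsProbabilityMeasure P] [IsFiniteMeasure Q]
    (hac : P ≪ Q) (hint : Integrable (llr P Q) P) :
    Real.exp (-(∫ x, llr P Q x ∂P) / 2) ≤ bhattacharyyaCoeff P Q := by
  have exp_eq_sqrt : (fun x ↦ Real.exp (-llr P Q x / 2)) =ᵐ[P]
      fun x ↦ √(Q.rnDeriv P x).toReal := by
    filter_upwards [exp_neg_llr hac] with x hx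
    rw [Real.exp_half, hx]
  calc Real.exp (-(∫ x, llr P Q x ∂P) / 2)
      = Real.exp (∫ x, -llr P Q x / 2 ∂P) := by rw [integral_div, integral_neg]
    _ ≤ ∫ x, Real.exp (-llr P Q x / 2) ∂P :=
        convexOn_exp.map_integral_le Real.continuous_exp.continuousOn isClosed_univ
          (ae_of_all _ fun _ ↦ Set.mem_univ _) (hint.neg.div_const 2)
          (integrable_sqrt_toReal_rnDeriv.congr exp_eq_sqrt.symm)
    _ = bhattacharyyaCoeff P Q := integral_congr_ae exp_eq_sqrt

lemma setIntegral_sqrt_toReal_rnDeriv_le [IsFiniteMeasure P] [IsFiniteMeasure Q] (A : Set Ω) :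
    ∫ x in A, √(Q.rnDeriv P x).toReal ∂P ≤ √(P.real A) * √(Q.real A) := by
  calc ∫ x in A, √(Q.rnDeriv P x).toReal ∂P
      ≤ √(P.real A) * √(∫ x in A, (Q.rnDeriv P x).toReal ∂P) := by
        simpa using integral_sqrt_le_sqrt_mul_sqrt (μ := P.restrict A)
          Measure.integrable_toReal_rnDeriv.restrict
          (ae_of_all _ fun _ ↦ ENNReal.toReal_nonneg)
    _ ≤ √(P.real A) * √(Q.real A) := by
        gcongr
        exact Measure.setIntegral_toReal_rnDeriv_le (measure_ne_top Q A)

lemma bhattacharyyaCoeff_le_add_compl [IsFiniteMeasure P] [IsFiniteMeasure Q] {A : Set Ω}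
    (hA : MeasurableSet A) :
    bhattacharyyaCoeff P Q ≤ √(P.real A) * √(Q.real A) + √(P.real Aᶜ) * √(Q.real Aᶜ) := by
  rw [bhattacharyyaCoeff, ← integral_add_compl hA integrable_sqrt_toReal_rnDeriv]
  exact add_le_add (setIntegral_sqrt_toReal_rnDeriv_le A) (setIntegral_sqrt_toReal_rnDeriv_le Aᶜ)

lemma sq_bhattacharyyaCoeff_le_mul [IsFiniteMeasure P] [IsFiniteMeasure Q] {A : Set Ω}
    (hA : MeasurableSet A) :
    bhattacharyyaCoeff P Q ^ 2 ≤ (P.real A + Q.real Aᶜ) * (Q.real A + P.real Aᶜ) := by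
  calc bhattacharyyaCoeff P Q ^ 2
      ≤ (√(P.real A) * √(Q.real A) + √(P.real Aᶜ) * √(Q.real Aᶜ)) ^ 2 :=
        pow_le_pow_left₀ bhattacharyyaCoeff_nonneg (bhattacharyyaCoeff_le_add_compl hA) 2
    _ = (√(P.real A) * √(Q.real A) + √(Q.real Aᶜ) * √(P.real Aᶜ)) ^ 2 := by ring
    _ ≤ (√(P.real A) ^ 2 + √(Q.real Aᶜ) ^ 2) * (√(Q.real A) ^ 2 + √(P.real Aᶜ) ^ 2) := by
        simpa using Finset.sum_mul_sq_le_sq_mul_sq Finset.univ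
          ![√(P.real A), √(Q.real Aᶜ)] ![√(Q.real A), √(P.real Aᶜ)]
    _ = (P.real A + Q.real Aᶜ) * (Q.real A + P.real Aᶜ) := by
        simp only [Real.sq_sqrt measureReal_nonneg]

lemma exp_neg_toReal_klDiv_le_mul [IsProbabilityMeasure P] [IsFiniteMeasure Q] {A : Set Ω}
    (hA : MeasurableSet A) (hfin : klDiv P Q ≠ ⊤) :
    Real.exp (-(klDiv P Q).toReal) ≤ (P.real A + Q.real Aᶜ) * (Q.real A + P.real Aᶜ) := by
  obtain ⟨hac, hint⟩ := klDiv_ne_top_iff.mp hfin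
  calc Real.exp (-(klDiv P Q).toReal)
      ≤ Real.exp (-∫ x, llr P Q x ∂P) := by
        gcongr
        exact integral_llr_le_toReal_klDiv hfin
    _ = Real.exp (-(∫ x, llr P Q x ∂P) / 2) ^ 2 := by
        rw [← Real.exp_nat_mul]
        ring_nf
    _ ≤ bhattacharyyaCoeff P Q ^ 2 := by
        gcongr
        exact exp_neg_half_integral_llr_le_bhattacharyyaCoeff hac hint
    _ ≤ (P.real A + Q.real Aᶜ) * (Q.real A + P.real Aᶜ) := sq_bhattacharyyaCoeff_le_mul hA

end

theorem bretagnolle_huber_general {Ω : Type*} [MeasurableSpace Ω]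
    (P Q : Measure Ω) [IsProbabilityMeasure P] [IsFiniteMeasure Q]
    (A : Set Ω) (hfin : klDiv P Q ≠ ⊤) :
    (1 + Q.real Set.univ)⁻¹ * Real.exp (-(klDiv P Q).toReal) ≤ P.real A + Q.real Aᶜ := by
  set B := toMeasurable P A
  have real_B : P.real B = P.real A := congrArg ENNReal.toReal (measure_toMeasurable A)
  have real_compl_B : Q.real Bᶜ ≤ Q.real Aᶜ :=
    measureReal_mono (Set.compl_subset_compl.mpr (subset_toMeasurable P A))
  rw [inv_mul_le_iff₀ (by positivity)]
  calc Real.exp (-(klDiv P Q).toReal)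
      ≤ (P.real B + Q.real Bᶜ) * (Q.real B + P.real Bᶜ) :=
        exp_neg_toReal_klDiv_le_mul (measurableSet_toMeasurable P A) hfin
    _ ≤ (P.real A + Q.real Aᶜ) * (Q.real Set.univ + 1) := by
        rw [real_B]
        gcongr
        · exact measure_ne_top Q Set.univ
        · exact Set.subset_univ B
        · exact measureReal_le_one
    _ = (1 + Q.real Set.univ) * (P.real A + Q.real Aᶜ) := by ring

/-- Bretagnolle–Huber inequality: `P(A) + Q(Aᶜ) ≥ (1/2) exp (- D(P‖Q))`.  (When
`D(P‖Q) = ⊤` the right-hand side is `0` and the inequality is trivial.) -/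
theorem bretagnolle_huber {Ω : Type*} [MeasurableSpace Ω]
    (P Q : Measure Ω) [IsProbabilityMeasure P] [IsProbabilityMeasure Q]
    (A : Set Ω) (hA : MeasurableSet A) (hfin : klDiv P Q ≠ ⊤) :
    (1 / 2) * Real.exp (-(klDiv P Q).toReal) ≤ (P A).toReal + (Q Aᶜ).toReal := by
  simpa [measureReal_def, one_add_one_eq_two] using bretagnolle_huber_general P Q A hfin
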